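/- Let X be a metric space with metric d, T : X → X a continuous map, and u ∈ X a point whose orbit {T^n u : n ≥ 0} has compact closure. Assume the restriction of T to the closure of the orbit of u is non-expansive, i.e. d(T x, T y) ≤ d(x, y) for all x, y in this closure. Then the dynamical system (ω(u), T restricted to ω(u)) is minimal: for every y ∈ ω(u), the ω-limit set ω(y) of y equals ω(u) (equivalently, the closure of the orbit of y equals ω(u)). -/

import Mathlib

open Filter Topology

/-- The ω-limit set of `u` under `T`: all limits of convergent subsequences of
the orbit sequence `(T^[n] u)`. -/
def omegaLimitSet {X : Type*} [MetricSpace X] (T : X → X) (u : X) : Set X :=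
  {x | ∃ φ : ℕ → ℕ, StrictMono φ ∧ Tendsto (fun n => T^[φ n] u) atTop (𝓝 x)}

/-! If `y ∈ ω(u)`, some `T^m u` is close to `y`. A non-expansive `T` does not increase this
distance, so the orbit of `u`, advanced by `m` steps, stays uniformly close to the orbit of `y`. The
distance can be made arbitrarily small, and advancing a sequence does not change its cluster points,
so the two orbits have the same cluster points. -/

open Set Uniformity

theorem omegaLimitSet_eq_omegaLimit {X : Type*} [MetricSpace X] (T : X → X) (u : X) :
    omegaLimitSet T u = omegaLimit atTop (T^[·]) {u} := by
  ext x
  rw [mem_omegaLimit_singleton_iff_mapClusterPt]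
  constructor
  · rintro ⟨φ, hφ, hlim⟩
    exact hlim.mapClusterPt.of_comp hφ.tendsto_atTop
  · exact MapClusterPt.tendsto_subseq

section UniformSpace

variable {X : Type*} [UniformSpace X]

theorem mapClusterPt_iff_of_forall_exists_map_eq {α β : Type*} {F : Filter α} {G : Filter β}
    {a : α → X} {b : β → X}
    (hab : ∀ V ∈ 𝓤 X, ∃ φ : α → β, map φ F = G ∧ ∀ᶠ t in F, (a t, b (φ t)) ∈ V) {z : X} :
    MapClusterPt z F a ↔ MapClusterPt z G b := by
  simp only [(nhds_basis_uniformity' (𝓤 X).basis_sets).mapClusterPt_iff_frequently]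
  constructor
  · intro hz V hV
    obtain ⟨W, hW, -, hWV⟩ := comp_symm_mem_uniformity_sets hV
    obtain ⟨φ, rfl, hφ⟩ := hab W hW
    exact frequently_map.2 <| ((hz W hW).and_eventually hφ).mono fun t ht ↦ hWV ⟨a t, ht⟩
  · intro hz V hV
    obtain ⟨W, hW, hWsymm, hWV⟩ := comp_symm_mem_uniformity_sets hV
    obtain ⟨φ, rfl, hφ⟩ := hab W hW
    exact ((frequently_map.1 (hz W hW)).and_eventually hφ).mono
      fun t ht ↦ hWV ⟨b (φ t), ht.1, hWsymm.symm _ _ ht.2⟩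

theorem omegaLimit_iterate_eq_of_equicontinuousWithinAt {T : X → X} {u y : X}
    (hT : EquicontinuousWithinAt (T^[·]) (range (T^[·] u)) y)
    (hy : y ∈ omegaLimit atTop (T^[·]) {u}) :
    omegaLimit atTop (T^[·]) {y} = omegaLimit atTop (T^[·]) {u} := by
  rw [mem_omegaLimit_singleton_iff_mapClusterPt] at hy
  ext z
  simp only [mem_omegaLimit_singleton_iff_mapClusterPt]
  refine mapClusterPt_iff_of_forall_exists_map_eq fun V hV ↦ ?_
  obtain ⟨m, hm⟩ : ∃ m, ∀ n, (T^[n] y, T^[n] (T^[m] u)) ∈ V :=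
    (hy.frequently (eventually_nhdsWithin_iff.1 (hT V hV))).exists.imp
      fun m hm ↦ hm (mem_range_self m)
  refine ⟨(· + m), map_add_atTop_eq_nat m, Eventually.of_forall fun n ↦ ?_⟩
  simpa only [Function.iterate_add_apply] using hm n

end UniformSpace

theorem mapsTo_closure_range_iterate {X : Type*} [TopologicalSpace X] {T : X → X} {u : X}
    (hT : ContinuousOn T (closure (range (T^[·] u)))) :
    MapsTo T (closure (range (T^[·] u))) (closure (range (T^[·] u))) := by
  refine MapsTo.closure_of_continuousOn ?_ hT
  rintro _ ⟨n, rfl⟩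
  exact ⟨n + 1, Function.iterate_succ_apply' T n u⟩

section PseudoEMetricSpace

variable {X : Type*} [PseudoEMetricSpace X] {T : X → X}

theorem lipschitzOnWith_iterate {K : NNReal} {s : Set X} (hT : LipschitzOnWith K T s)
    (hs : MapsTo T s s) (n : ℕ) : LipschitzOnWith (K ^ n) T^[n] s := by
  have h := (hT.mapsToRestrict hs).iterate n
  rw [hs.iterate_restrict] at h
  exact (hs.iterate n).lipschitzOnWith_iff_restrict.2 h

theorem nonexpansive_omegaLimitSet_minimal_general {u : X}
    (hT : LipschitzOnWith 1 T (closure (range (T^[·] u)))) {y : X}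
    (hy : y ∈ omegaLimit atTop (T^[·]) {u}) :
    omegaLimit atTop (T^[·]) {y} = omegaLimit atTop (T^[·]) {u} := by
  have hyc : y ∈ closure (range (T^[·] u)) :=
    isClosed_closure.mem_of_mapClusterPt ((mem_omegaLimit_singleton_iff_mapClusterPt ..).1 hy)
      (Eventually.of_forall fun n ↦ subset_closure (mem_range_self n))
  have hlip (n : ℕ) : LipschitzOnWith 1 T^[n] (closure (range (T^[·] u))) := by
    simpa only [one_pow] using
      lipschitzOnWith_iterate hT (mapsTo_closure_range_iterate hT.continuousOn) n
  have hequi : EquicontinuousOn (T^[·]) (closure (range (T^[·] u))) :=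
    (LipschitzOnWith.uniformEquicontinuousOn (T^[·]) 1 hlip).equicontinuousOn
  exact omegaLimit_iterate_eq_of_equicontinuousWithinAt ((hequi y hyc).mono subset_closure) hy

end PseudoEMetricSpace

/-- If `T` is non-expansive on the orbit closure of `u`, then `(ω(u), T)` is a
minimal dynamical system: `ω(y) = ω(u)` for every `y ∈ ω(u)`. -/
theorem nonexpansive_omegaLimitSet_minimal {X : Type*} [MetricSpace X]
    (T : X → X) (hT : Continuous T) (u : X)
    (hc : IsCompact (closure (Set.range fun n => T^[n] u)))
    (hne : ∀ x ∈ closure (Set.range fun n => T^[n] u),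
      ∀ y ∈ closure (Set.range fun n => T^[n] u), dist (T x) (T y) ≤ dist x y) :
    ∀ y ∈ omegaLimitSet T u, omegaLimitSet T y = omegaLimitSet T u := by
  simp only [omegaLimitSet_eq_omegaLimit]
  exact fun y ↦ nonexpansive_omegaLimitSet_minimal_general (LipschitzOnWith.mk_one hne)
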